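/- Second-order operadic Stokes law: for every bilinear map μ ∈ C² and all multilinear maps h ∈ C^m, f ∈ C^n, g ∈ C^p, δ_μ⟨h|fg⟩ − ⟨h|f(δ_μ g)⟩ − (−1)^{|g|}⟨h|(δ_μ f)g⟩ − (−1)^{|g|+|f|}⟨(δ_μ h)|fg⟩ = (−1)^{|g|} ((h ∘ f) ⌣ g + (−1)^{|h| n} f ⌣ (h ∘ g) − h ∘ (f ⌣ g)), where |h| = m − 1, |f| = n − 1, |g| = p − 1. -/

import Mathlib

/-!
Count the inputs of `h` and distribute further operations over them. Composing `⟨h|fg⟩` with `u`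
puts `u` into `f`, into `g`, or into a third slot of `h`; inserting `f` and `g` into `h ∘ u` puts
each of them into `u` or next to it. This gives, with Koszul signs understood,

* `⟨h|fg⟩ ∘ u = ⟨h|(f ∘ u)g⟩ + ⟨h|f(g ∘ u)⟩ + ⟨h|ufg⟩ + ⟨h|fug⟩ + ⟨h|fgu⟩`,
* `⟨h ∘ u|fg⟩ = ⟨h|(u ∘ f)g⟩ + ⟨h|f(u ∘ g)⟩ + h ∘ ⟨u|fg⟩ + ⟨h|ufg⟩ + ⟨h|fug⟩ + ⟨h|fgu⟩`.

The Stokes law is the first relation at `u = μ` and the second at both `(h, μ)` and `(μ, h)`. The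
triple braces of `h` and `μ` cancel between the first two, and those of the binary `μ` vanish. Since
`f ⌣ g = (-1)^{deg f} ⟨μ|fg⟩`, the terms that survive are the cup products.
-/

open Finset

section OperadPrelude

variable {K : Type*} [CommRing K] {L : Type*} [AddCommGroup L] [Module K L]

/-- `C K L n`: the `K`-module of `n`-multilinear maps `L^n → L`
(the degree-`n` component of the endomorphism operad of `L`). -/
abbrev C (K L : Type*) [CommRing K] [AddCommGroup L] [Module K L] (n : ℕ) :=
  MultilinearMap K (fun _ : Fin n => L) L

/-- The extension of an `n`-ary multilinear operation to sequences `ℕ → L`: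
it evaluates `f` on the first `n` entries of the sequence.  Two `n`-ary
multilinear operations are equal iff their extensions are equal, so operadic
identities are stated as identities between extensions. -/
def ex {n : ℕ} (f : C K L n) : (ℕ → L) → L := fun x => f fun j => x j.1

/-- The sign `(-1)^e` for an integer exponent `e`. -/
def sgn (e : ℤ) : ℤ := (((-1 : ℤˣ) ^ e : ℤˣ) : ℤ)

/-- Partial composition `f ∘ᵢ g`, where `n = deg g`:
`(f ∘ᵢ g)(x₀, x₁, …) = (-1)^{i(n-1)} f(x₀,…,x_{i-1}, g(x_i,…,x_{i+n-1}), x_{i+n},…)`. -/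
def pc (n i : ℕ) (f g : (ℕ → L) → L) : (ℕ → L) → L :=
  fun x => sgn ((i : ℤ) * ((n : ℤ) - 1)) •
    f fun j => if j < i then x j else if j = i then g (fun k => x (i + k)) else x (j + n - 1)

/-- Total composition `f ∘ g := Σ_{i=0}^{m-1} f ∘ᵢ g`, where `m = deg f`, `n = deg g`. -/
def tc (m n : ℕ) (f g : (ℕ → L) → L) : (ℕ → L) → L :=
  fun x => ∑ i ∈ Finset.range m, pc n i f g x

/-- The associator `(h, f, g) := (h ∘ f) ∘ g − h ∘ (f ∘ g)` of the total composition,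
where `m = deg h`, `n = deg f`, `p = deg g`. -/
def assoc (m n p : ℕ) (h f g : (ℕ → L) → L) : (ℕ → L) → L :=
  fun x => tc (m + n - 1) p (tc m n h f) g x - tc m (n + p - 1) h (tc n p f g) x

/-- The brace `⟨h|fg⟩ := Σ (h ∘ᵢ f) ∘ⱼ g`, summed over `0 ≤ i ≤ m-2`,
`i + n ≤ j ≤ m + n - 2`, where `m = deg h`, `n = deg f`, `p = deg g`. -/
def br2 (m n p : ℕ) (h f g : (ℕ → L) → L) : (ℕ → L) → L :=
  fun x => ∑ i ∈ Finset.range (m - 1), ∑ j ∈ Finset.Icc (i + n) (m + n - 2),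
    pc p j (pc n i h f) g x

/-- The triple brace `⟨h|fgb⟩ := Σ ((h ∘ᵢ f) ∘ⱼ g) ∘ₖ b`, summed over `0 ≤ i ≤ m-3`,
`i + n ≤ j ≤ m + n - 3`, `j + p ≤ k ≤ m + n + p - 3`, where
`m = deg h`, `n = deg f`, `p = deg g`, `q = deg b`. -/
def br3 (m n p q : ℕ) (h f g b : (ℕ → L) → L) : (ℕ → L) → L :=
  fun x => ∑ i ∈ Finset.range (m - 2), ∑ j ∈ Finset.Icc (i + n) (m + n - 3),
    ∑ k ∈ Finset.Icc (j + p) (m + n + p - 3),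
      pc q k (pc p j (pc n i h f) g) b x

/-- The Gerstenhaber bracket `[f,g] := f ∘ g − (-1)^{|f||g|} g ∘ f`,
where `m = deg f`, `n = deg g`, `|f| = m - 1`, `|g| = n - 1`. -/
def gb (m n : ℕ) (f g : (ℕ → L) → L) : (ℕ → L) → L :=
  fun x => tc m n f g x - sgn (((m : ℤ) - 1) * ((n : ℤ) - 1)) • tc n m g f x

/-- The cup product `f ⌣ g := (-1)^{deg f} (μ ∘₀ f) ∘_{deg f} g`,
where `m = deg f`, `n = deg g`. -/
def cup (μ : C K L 2) (m n : ℕ) (f g : (ℕ → L) → L) : (ℕ → L) → L :=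
  fun x => sgn (m : ℤ) • pc n m (pc m 0 (ex μ) f) g x

/-- The coboundary operator `δ_μ f := −[f, μ]`, where `m = deg f`. -/
def delta (μ : C K L 2) (m : ℕ) (f : (ℕ → L) → L) : (ℕ → L) → L :=
  fun x => - gb m 2 f (ex μ) x

section Sign

theorem sgn_add (a b : ℤ) : sgn (a + b) = sgn a * sgn b := by
  simp [sgn, zpow_add]

theorem sgn_eq_one_or_neg_one (a : ℤ) : sgn a = 1 ∨ sgn a = -1 := by
  rcases Int.units_eq_one_or ((-1 : ℤˣ) ^ a) with h | h <;> simp [sgn, h]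

theorem sgn_mul_self (a : ℤ) : sgn a * sgn a = 1 := by
  rcases sgn_eq_one_or_neg_one a with h | h <;> simp [h]

theorem sgn_eq_neg_sgn_sub_one (a : ℤ) : sgn a = -sgn (a - 1) := by
  conv_lhs => rw [← sub_add_cancel a 1, sgn_add]
  simp [sgn]

/-- The Koszul sign `(-1)^{|f||g|}` for `deg f = n`, `deg g = p`. -/
def koszulSign (n p : ℕ) : ℤ := sgn (((n : ℤ) - 1) * ((p : ℤ) - 1))

theorem koszulSign_one_right (n : ℕ) : koszulSign n 1 = 1 := by
  simp [koszulSign, sgn]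

theorem koszulSign_two_right (n : ℕ) : koszulSign n 2 = sgn ((n : ℤ) - 1) := by
  norm_num [koszulSign]

theorem koszulSign_comm (n p : ℕ) : koszulSign n p = koszulSign p n := by
  rw [koszulSign, koszulSign, mul_comm]

end Sign

section SumSplitting

variable {V : Type*} [AddCommMonoid V]

theorem sum_range_sum_Ico_comm (m : ℕ) (φ : ℕ → ℕ → V) :
    ∑ i ∈ range m, ∑ j ∈ Ico (i + 1) m, φ i j = ∑ j ∈ range m, ∑ i ∈ range j, φ i j := by
  simpa only [range_eq_Ico] using sum_Ico_Ico_comm' 0 m φ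

theorem sum_range_replace_slot {m k : ℕ} (hk : k < m) (q : ℕ) (φ : ℕ → V) :
    ∑ l ∈ range (m + q - 1), φ l
      = ∑ l ∈ range k, φ l + ∑ a ∈ range q, φ (k + a)
        + ∑ l ∈ Ico (k + 1) m, φ (l + q - 1) := by
  rw [show m + q - 1 = k + q + (m - (k + 1)) by omega, sum_range_add, sum_range_add,
    sum_Ico_eq_sum_range]
  congr! 3
  omega

theorem sum_range_replace_two_slots {m i j : ℕ} (hij : i < j) (hj : j < m) (n p : ℕ)
    (φ : ℕ → V) :
    ∑ k ∈ range (m + n + p - 2), φ k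
      = ∑ k ∈ range i, φ k + ∑ a ∈ range n, φ (i + a) + ∑ k ∈ Ico (i + 1) j, φ (k + n - 1)
        + ∑ b ∈ range p, φ (j + n - 1 + b) + ∑ k ∈ Ico (j + 1) m, φ (k + n - 1 + p - 1) := by
  rw [show m + n + p - 2 = m + n - 1 + p - 1 by omega,
    sum_range_replace_slot (show j + n - 1 < m + n - 1 by omega), sum_range_replace_slot hij]
  congr 1
  simp only [sum_Ico_eq_sum_range]
  congr! 2 <;> omega

theorem sum_range_sum_range_replace_slot {m k : ℕ} (hk : k < m) (q : ℕ) (φ : ℕ → ℕ → V) :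
    ∑ j ∈ range (m + q - 1), ∑ i ∈ range j, φ i j
      = ∑ j ∈ range k, ∑ i ∈ range j, φ i j
        + (∑ b ∈ range q, ∑ i ∈ range k, φ i (k + b)
          + ∑ b ∈ range q, ∑ a ∈ range b, φ (k + a) (k + b))
        + (∑ j ∈ Ico (k + 1) m, ∑ i ∈ range k, φ i (j + q - 1)
          + ∑ j ∈ Ico (k + 1) m, ∑ a ∈ range q, φ (k + a) (j + q - 1)
          + ∑ j ∈ Ico (k + 1) m, ∑ i ∈ Ico (k + 1) j, φ (i + q - 1) (j + q - 1)) := by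
  simp only [sum_range_replace_slot hk, sum_range_add, ← sum_add_distrib]
  congr 1
  refine sum_congr rfl fun j hj ↦ sum_range_replace_slot ?_ q _
  exact (mem_Ico.1 hj).1

end SumSplitting

section PartialComposition

/-- `F` is additive in its `j`-th entry. -/
def AdditiveAt (j : ℕ) (F : (ℕ → L) → L) : Prop :=
  ∀ (x : ℕ → L) (a b : L), F (Function.update x j (a + b))
    = F (Function.update x j a) + F (Function.update x j b)

variable {n p i j k : ℕ} {F f : (ℕ → L) → L}

theorem additiveAt_ex (f : C K L n) (hj : j < n) : AdditiveAt j (ex f) := by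
  intro x a b
  have restrict_update (c : L) : (fun l : Fin n ↦ Function.update x j c l)
      = Function.update (fun l : Fin n ↦ x l) ⟨j, hj⟩ c :=
    Function.update_comp_eq_of_injective x Fin.val_injective ⟨j, hj⟩ c
  simp only [ex, restrict_update, f.map_update_add]

theorem dependsOn_ex (f : C K L n) : DependsOn (ex f) (Set.Iio n) :=
  fun _ _ hxy ↦ congrArg f (funext fun l ↦ hxy l l.2)

theorem pc_apply_eq_update (n i : ℕ) (F g : (ℕ → L) → L) (x : ℕ → L) :
    pc n i F g x = sgn ((i : ℤ) * ((n : ℤ) - 1)) •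
      F (Function.update (fun l ↦ if l < i then x l else x (l + n - 1)) i
        (g fun k ↦ x (i + k))) := by
  rw [pc]
  congr 2
  grind [Function.update_apply]

-- A constant is composed as a unary operation, so that the remaining inputs stay in place.
theorem pc_one_const (j : ℕ) (F : (ℕ → L) → L) (c : L) (x : ℕ → L) :
    pc 1 j F (fun _ ↦ c) x = F (Function.update x j c) := by
  simp [pc_apply_eq_update, sgn]

/-- Partial composition as an additive function of its left factor. -/
def pcLeftHom (p j : ℕ) (g : (ℕ → L) → L) : ((ℕ → L) → L) →+ ((ℕ → L) → L) :=
  AddMonoidHom.mk' (fun F ↦ pc p j F g) fun F F' ↦ by ext x; simp [pc]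

theorem pc_add_right (hF : AdditiveAt j F) (g g' : (ℕ → L) → L) :
    pc p j F (g + g') = pc p j F g + pc p j F g' := by
  ext x
  simp only [Pi.add_apply, pc_apply_eq_update, hF _ _ _, smul_add]

/-- Partial composition in a slot where the left factor is additive, as an additive function of
its right factor. -/
def pcRightHom (p : ℕ) (hF : AdditiveAt j F) : ((ℕ → L) → L) →+ ((ℕ → L) → L) :=
  AddMonoidHom.mk' (pc p j F) (pc_add_right hF)

theorem pc_sum_left {ι : Type*} (p j : ℕ) (s : Finset ι) (F : ι → (ℕ → L) → L)
    (g : (ℕ → L) → L) : pc p j (∑ a ∈ s, F a) g = ∑ a ∈ s, pc p j (F a) g :=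
  map_sum (pcLeftHom p j g) F s

theorem pc_sub_left (p j : ℕ) (F F' g : (ℕ → L) → L) :
    pc p j (F - F') g = pc p j F g - pc p j F' g :=
  map_sub (pcLeftHom p j g) F F'

theorem pc_zsmul_left (p j : ℕ) (e : ℤ) (F g : (ℕ → L) → L) :
    pc p j (e • F) g = e • pc p j F g :=
  map_zsmul (pcLeftHom p j g) e F

theorem pc_sum_right {ι : Type*} (hF : AdditiveAt j F) (s : Finset ι) (g : ι → (ℕ → L) → L) :
    pc p j F (∑ a ∈ s, g a) = ∑ a ∈ s, pc p j F (g a) :=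
  map_sum (pcRightHom p hF) g s

theorem pc_sub_right (hF : AdditiveAt j F) (g g' : (ℕ → L) → L) :
    pc p j F (g - g') = pc p j F g - pc p j F g' :=
  map_sub (pcRightHom p hF) g g'

theorem pc_zsmul_right (hF : AdditiveAt j F) (e : ℤ) (g : (ℕ → L) → L) :
    pc p j F (e • g) = e • pc p j F g :=
  map_zsmul (pcRightHom p hF) e g

theorem pc_zero_right (hF : AdditiveAt j F) : pc p j F 0 = 0 :=
  map_zero (pcRightHom p hF)

theorem pc_parallel (F g : (ℕ → L) → L) (hf : DependsOn f (Set.Iio n)) (hij : i < j) :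
    pc n i (pc p j F g) f = koszulSign n p • pc p (j + n - 1) (pc n i F f) g := by
  ext x
  simp only [pc, koszulSign, Pi.smul_apply, smul_smul]
  congr 1
  · have cast_index : ((j + n - 1 : ℕ) : ℤ) = ((n : ℤ) - 1) + j := by omega
    rw [cast_index, add_mul _ _ ((p : ℤ) - 1), sgn_add, ← mul_assoc, ← mul_assoc, sgn_mul_self,
      one_mul, mul_comm]
  · congr 1
    ext l
    have f_inputs : f (fun r ↦ x (i + r))
        = f (fun r ↦ if i + r < j + n - 1 then x (i + r)
            else if i + r = j + n - 1 then g (fun s ↦ x (j + n - 1 + s))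
            else x (i + r + p - 1)) := by
      refine hf fun r (hr : r < n) ↦ ?_
      rw [if_pos (by omega)]
    have g_inputs : g (fun r ↦ if j + r < i then x (j + r)
          else if j + r = i then f (fun s ↦ x (i + s)) else x (j + r + n - 1))
        = g (fun r ↦ x (j + n - 1 + r)) := by
      congr 1
      grind
    grind

theorem pc_sequential (f g : (ℕ → L) → L) (hF : AdditiveAt i F) (hk : k < n) :
    pc p (i + k) (pc n i F f) g = pc (n + p - 1) i F (pc p k f g) := by
  have pc_eq_sgn_smul : pc p k f g = sgn ((k : ℤ) * ((p : ℤ) - 1)) • fun x ↦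
    f fun r ↦ if r < k then x r else if r = k then g (fun s ↦ x (k + s)) else x (r + p - 1) := rfl
  rw [pc_eq_sgn_smul, pc_zsmul_right hF]
  ext x
  simp only [pc, Pi.smul_apply, smul_smul]
  congr 1
  · have cast_arity : ((n + p - 1 : ℕ) : ℤ) = n + p - 1 := by omega
    rw [cast_arity, ← sgn_add, ← sgn_add]
    congr 1
    push_cast
    ring
  · congr 1
    ext l
    have f_inputs : (fun r ↦ if i + r < i + k then x (i + r)
          else if i + r = i + k then g (fun s ↦ x (i + k + s)) else x (i + r + p - 1))
        = fun r ↦ if r < k then x (i + r)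
          else if r = k then g (fun s ↦ x (i + (k + s))) else x (i + (r + p - 1)) := by
      simp only [add_assoc]
      grind
    grind

theorem additiveAt_pc (hF : AdditiveAt j F) (hf : DependsOn f (Set.Iio n)) (hij : i < j) :
    AdditiveAt (j + n - 1) (pc n i F f) := by
  have update_eq (x : ℕ → L) (c : L) : pc n i F f (Function.update x (j + n - 1) c)
      = pc n i (pc 1 j F fun _ ↦ c) f x := by
    rw [pc_parallel F _ hf hij, koszulSign_one_right, one_smul, pc_one_const]
  have const_add (a b : L) : (fun _ : ℕ → L ↦ a + b) = (fun _ ↦ a) + fun _ ↦ b := rfl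
  intro x a b
  rw [update_eq, update_eq, update_eq, const_add, pc_add_right hF]
  exact congrFun (map_add (pcLeftHom n i f) _ _) x

end PartialComposition

section Insertion

variable {m n p q i j k : ℕ} {h f g u : (ℕ → L) → L}

/-- The summand of `⟨h|fg⟩` with `f` in slot `i` and `g` in slot `j` of `h`, where `i < j`,
`deg f = n` and `deg g = p`. Both slots are counted among the inputs of `h`, so that `g` enters
`h ∘ᵢ f` in slot `j + n - 1`. -/
def insert2 (n p i j : ℕ) (h f g : (ℕ → L) → L) : (ℕ → L) → L :=
  pc p (j + n - 1) (pc n i h f) g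

/-- The summand of `⟨h|fgb⟩` with `f`, `g`, `b` in the slots `i < j < k` of `h`, where `deg f = n`,
`deg g = p` and `deg b = q`. All slots are counted among the inputs of `h`. -/
def insert3 (n p q i j k : ℕ) (h f g b : (ℕ → L) → L) : (ℕ → L) → L :=
  pc q (k + n - 1 + p - 1) (insert2 n p i j h f g) b

theorem pc_insert2_of_lt_left (h f g : (ℕ → L) → L) (hu : DependsOn u (Set.Iio q)) (hki : k < i)
    (hij : i < j) :
    pc q k (insert2 n p i j h f g) u
      = (koszulSign n q * koszulSign p q) • insert3 q n p k i j h u f g := by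
  rw [insert2, pc_parallel _ g hu (by omega), pc_parallel h f hu hki, pc_zsmul_left, smul_smul,
    koszulSign_comm q n, koszulSign_comm q p, mul_comm, insert3, insert2]
  congr! 2
  omega

theorem pc_insert2_left (f g : (ℕ → L) → L) (hh : AdditiveAt i h) (hu : DependsOn u (Set.Iio q))
    (hij : i < j) (hk : k < n) :
    pc q (i + k) (insert2 n p i j h f g) u
      = koszulSign p q • insert2 (n + q - 1) p i j h (pc q k f u) g := by
  rw [insert2, pc_parallel _ g hu (by omega), pc_sequential f u hh hk, koszulSign_comm, insert2]
  congr 2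
  omega

theorem pc_insert2_between (h f g : (ℕ → L) → L) (hu : DependsOn u (Set.Iio q)) (hik : i < k)
    (hkj : k < j) :
    pc q (k + n - 1) (insert2 n p i j h f g) u
      = koszulSign p q • insert3 n q p i k j h f u g := by
  rw [insert2, pc_parallel _ g hu (by omega), koszulSign_comm, insert3, insert2]

theorem pc_insert2_right (g u : (ℕ → L) → L) (hh : AdditiveAt j h) (hf : DependsOn f (Set.Iio n))
    (hij : i < j) (hk : k < p) :
    pc q (j + n - 1 + k) (insert2 n p i j h f g) u = insert2 n (p + q - 1) i j h f (pc q k g u) :=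
  pc_sequential g u (additiveAt_pc hh hf hij) hk

theorem insert2_pc_of_lt (h u : (ℕ → L) → L) (hf : DependsOn f (Set.Iio n))
    (hg : DependsOn g (Set.Iio p)) (hij : i < j) (hjk : j < k) :
    insert2 n p i j (pc q k h u) f g
      = (koszulSign n q * koszulSign p q) • insert3 n p q i j k h f g u := by
  rw [insert2, pc_parallel h u hf (by omega), pc_zsmul_left, pc_parallel _ u hg (by omega),
    smul_smul, insert3, insert2]

theorem insert2_pc_right (u g : (ℕ → L) → L) (hh : AdditiveAt k h) (hf : DependsOn f (Set.Iio n))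
    (hik : i < k) (hj : j < q) :
    insert2 n p i (k + j) (pc q k h u) f g
      = koszulSign n q • insert2 n (p + q - 1) i k h f (pc p j u g) := by
  rw [insert2, pc_parallel h u hf hik, pc_zsmul_left,
    show k + j + n - 1 = k + n - 1 + j by omega,
    pc_sequential u g (additiveAt_pc hh hf hik) hj, add_comm q p, insert2]

theorem insert2_pc_between (h u g : (ℕ → L) → L) (hf : DependsOn f (Set.Iio n)) (hik : i < k)
    (hkj : k < j) :
    insert2 n p i (j + q - 1) (pc q k h u) f g
      = koszulSign n q • insert3 n q p i k j h f u g := by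
  rw [insert2, pc_parallel h u hf hik, pc_zsmul_left, insert3, insert2]
  congr 2
  omega

theorem insert2_pc_inside (u f g : (ℕ → L) → L) (hh : AdditiveAt k h) (hij : i < j) (hj : j < q) :
    insert2 n p (k + i) (k + j) (pc q k h u) f g
      = pc (q + n + p - 2) k h (insert2 n p i j u f g) := by
  rw [insert2, pc_sequential u f hh (hij.trans hj),
    show k + j + n - 1 = k + (j + n - 1) by omega,
    pc_sequential _ g hh (show j + n - 1 < q + n - 1 by omega),
    show q + n - 1 + p - 1 = q + n + p - 2 by omega, insert2]

theorem insert2_pc_left (u f g : (ℕ → L) → L) (hh : AdditiveAt k h) (hkj : k < j) (hi : i < q) :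
    insert2 n p (k + i) (j + q - 1) (pc q k h u) f g
      = insert2 (n + q - 1) p k j h (pc n i u f) g := by
  rw [insert2, pc_sequential u f hh hi, add_comm q n, insert2]
  congr 1
  omega

theorem sum_pc_insert2 (hhi : AdditiveAt i h) (hhj : AdditiveAt j h)
    (hf : DependsOn f (Set.Iio n)) (g : (ℕ → L) → L) (hu : DependsOn u (Set.Iio q))
    (hij : i < j) (hj : j < m) :
    ∑ k ∈ range (m + n + p - 2), pc q k (insert2 n p i j h f g) u
      = (koszulSign n q * koszulSign p q) • ∑ k ∈ range i, insert3 q n p k i j h u f g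
        + koszulSign p q • ∑ a ∈ range n, insert2 (n + q - 1) p i j h (pc q a f u) g
        + koszulSign p q • ∑ k ∈ Ico (i + 1) j, insert3 n q p i k j h f u g
        + ∑ b ∈ range p, insert2 n (p + q - 1) i j h f (pc q b g u)
        + ∑ k ∈ Ico (j + 1) m, insert3 n p q i j k h f g u := by
  rw [sum_range_replace_two_slots hij hj]
  simp only [smul_sum]
  congr 1
  · congr 1
    · congr 1
      · congr 1
        · exact sum_congr rfl fun k hk ↦ pc_insert2_of_lt_left h f g hu (mem_range.1 hk) hij
        · exact sum_congr rfl fun a ha ↦ pc_insert2_left f g hhi hu hij (mem_range.1 ha)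
      · refine sum_congr rfl fun k hk ↦ ?_
        exact pc_insert2_between h f g hu (mem_Ico.1 hk).1 (mem_Ico.1 hk).2
    · exact sum_congr rfl fun b hb ↦ pc_insert2_right g u hhj hf hij (mem_range.1 hb)

theorem sum_insert2_pc (hh : AdditiveAt k h) (u : (ℕ → L) → L) (hf : DependsOn f (Set.Iio n))
    (hg : DependsOn g (Set.Iio p)) (hk : k < m) :
    ∑ j ∈ range (m + q - 1), ∑ i ∈ range j, insert2 n p i j (pc q k h u) f g
      = (koszulSign n q * koszulSign p q) •
          ∑ j ∈ range k, ∑ i ∈ range j, insert3 n p q i j k h f g u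
        + (koszulSign n q • ∑ b ∈ range q, ∑ i ∈ range k,
              insert2 n (p + q - 1) i k h f (pc p b u g)
          + ∑ b ∈ range q, ∑ a ∈ range b, pc (q + n + p - 2) k h (insert2 n p a b u f g))
        + (koszulSign n q • ∑ j ∈ Ico (k + 1) m, ∑ i ∈ range k, insert3 n q p i k j h f u g
          + ∑ j ∈ Ico (k + 1) m, ∑ a ∈ range q, insert2 (n + q - 1) p k j h (pc n a u f) g
          + ∑ j ∈ Ico (k + 1) m, ∑ i ∈ Ico (k + 1) j, insert3 q n p k i j h u f g) := by
  rw [sum_range_sum_range_replace_slot hk]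
  simp only [smul_sum]
  congr 1
  · congr 1
    · refine sum_congr rfl fun j hj ↦ sum_congr rfl fun i hi ↦ ?_
      exact insert2_pc_of_lt h u hf hg (mem_range.1 hi) (mem_range.1 hj)
    · congr 1
      · refine sum_congr rfl fun b hb ↦ sum_congr rfl fun i hi ↦ ?_
        exact insert2_pc_right u g hh hf (mem_range.1 hi) (mem_range.1 hb)
      · refine sum_congr rfl fun b hb ↦ sum_congr rfl fun a ha ↦ ?_
        exact insert2_pc_inside u f g hh (mem_range.1 ha) (mem_range.1 hb)
  · congr 2
    · refine sum_congr rfl fun j hj ↦ sum_congr rfl fun i hi ↦ ?_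
      exact insert2_pc_between h u g hf (mem_range.1 hi) (mem_Ico.1 hj).1
    · refine sum_congr rfl fun j hj ↦ sum_congr rfl fun a ha ↦ ?_
      exact insert2_pc_left u f g hh (mem_Ico.1 hj).1 (mem_range.1 ha)

end Insertion

section Brace

variable {m n p q : ℕ} {h f g u : (ℕ → L) → L}

theorem tc_eq_sum (m n : ℕ) (f g : (ℕ → L) → L) : tc m n f g = ∑ i ∈ range m, pc n i f g := by
  ext x
  simp [tc]

theorem br2_eq_sum_insert2 (m n p : ℕ) (h f g : (ℕ → L) → L) :
    br2 m n p h f g = ∑ j ∈ range m, ∑ i ∈ range j, insert2 n p i j h f g := by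
  ext x
  simp only [br2, insert2, Finset.sum_apply, sum_sigma']
  refine sum_bij' (fun a _ ↦ ⟨a.2 + 1 - n, a.1⟩) (fun a _ ↦ ⟨a.2, a.1 + n - 1⟩) ?_ ?_ ?_ ?_ ?_
  all_goals grind

theorem br3_eq_sum_insert3 (m n p q : ℕ) (h f g b : (ℕ → L) → L) :
    br3 m n p q h f g b
      = ∑ k ∈ range m, ∑ j ∈ range k, ∑ i ∈ range j, insert3 n p q i j k h f g b := by
  ext x
  simp only [br3, insert3, insert2, Finset.sum_apply, sum_sigma']
  refine sum_bij' (fun a _ ↦ ⟨a.2.2 + 2 - n - p, a.2.1 + 1 - n, a.1⟩)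
    (fun a _ ↦ ⟨a.2.2, a.2.1 + n - 1, a.1 + n - 1 + p - 1⟩) ?_ ?_ ?_ ?_ ?_
  all_goals grind

theorem br2_tc_left_eq_sum (hh : ∀ l < m, AdditiveAt l h) (f u g : (ℕ → L) → L) (r : ℕ) :
    br2 m r p h (tc n q f u) g
      = ∑ j ∈ range m, ∑ i ∈ range j, ∑ a ∈ range n, insert2 r p i j h (pc q a f u) g := by
  rw [br2_eq_sum_insert2, tc_eq_sum]
  refine sum_congr rfl fun j hj ↦ sum_congr rfl fun i hi ↦ ?_
  rw [insert2, pc_sum_right (hh i (by grind)), pc_sum_left]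
  rfl

theorem br2_tc_right_eq_sum (hh : ∀ l < m, AdditiveAt l h) (hf : DependsOn f (Set.Iio n))
    (g u : (ℕ → L) → L) (r : ℕ) :
    br2 m n r h f (tc p q g u)
      = ∑ j ∈ range m, ∑ i ∈ range j, ∑ b ∈ range p, insert2 n r i j h f (pc q b g u) := by
  rw [br2_eq_sum_insert2, tc_eq_sum]
  refine sum_congr rfl fun j hj ↦ sum_congr rfl fun i hi ↦ ?_
  exact pc_sum_right (additiveAt_pc (hh j (mem_range.1 hj)) hf (mem_range.1 hi)) _ _

theorem br2_tc_eq_sum (r : ℕ) (h u f g : (ℕ → L) → L) :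
    br2 r n p (tc m q h u) f g
      = ∑ k ∈ range m, ∑ j ∈ range r, ∑ i ∈ range j, insert2 n p i j (pc q k h u) f g := by
  simp only [br2_eq_sum_insert2, tc_eq_sum, insert2, pc_sum_left]
  rw [sum_comm (s := range m)]
  exact sum_congr rfl fun j _ ↦ sum_comm

theorem tc_br2 (hh : ∀ l < m, AdditiveAt l h) (hf : DependsOn f (Set.Iio n))
    (g : (ℕ → L) → L) (hu : DependsOn u (Set.Iio q)) :
    tc (m + n + p - 2) q (br2 m n p h f g) u
      = (koszulSign n q * koszulSign p q) • br3 m q n p h u f g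
        + koszulSign p q • br2 m (n + q - 1) p h (tc n q f u) g
        + koszulSign p q • br3 m n q p h f u g
        + br2 m n (p + q - 1) h f (tc p q g u)
        + br3 m n p q h f g u := by
  have br3_last : br3 m n p q h f g u
      = ∑ j ∈ range m, ∑ i ∈ range j, ∑ k ∈ Ico (j + 1) m, insert3 n p q i j k h f g u := by
    rw [br3_eq_sum_insert3, ← sum_range_sum_Ico_comm]
    exact sum_congr rfl fun j _ ↦ sum_comm
  have br3_middle : br3 m n q p h f u g
      = ∑ j ∈ range m, ∑ i ∈ range j, ∑ k ∈ Ico (i + 1) j, insert3 n q p i k j h f u g := by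
    rw [br3_eq_sum_insert3]
    exact sum_congr rfl fun j _ ↦ (sum_range_sum_Ico_comm j _).symm
  have swap_sums : tc (m + n + p - 2) q (br2 m n p h f g) u
      = ∑ j ∈ range m, ∑ i ∈ range j, ∑ k ∈ range (m + n + p - 2),
          pc q k (insert2 n p i j h f g) u := by
    simp only [tc_eq_sum, br2_eq_sum_insert2, pc_sum_left]
    rw [sum_comm]
    exact sum_congr rfl fun j _ ↦ sum_comm
  rw [swap_sums, br3_last, br3_middle, br3_eq_sum_insert3, br2_tc_left_eq_sum hh,
    br2_tc_right_eq_sum hh hf]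
  simp only [smul_sum, ← sum_add_distrib]
  refine sum_congr rfl fun j hj ↦ sum_congr rfl fun i hi ↦ ?_
  rw [mem_range] at hi hj
  simpa only [smul_sum] using
    sum_pc_insert2 (hh i (hi.trans hj)) (hh j hj) hf g hu hi hj

theorem br2_tc (hh : ∀ l < m, AdditiveAt l h) (u : (ℕ → L) → L) (hf : DependsOn f (Set.Iio n))
    (hg : DependsOn g (Set.Iio p)) :
    br2 (m + q - 1) n p (tc m q h u) f g
      = (koszulSign n q * koszulSign p q) • br3 m n p q h f g u
        + (koszulSign n q • br2 m n (p + q - 1) h f (tc q p u g)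
          + tc m (q + n + p - 2) h (br2 q n p u f g))
        + (koszulSign n q • br3 m n q p h f u g
          + br2 m (n + q - 1) p h (tc q n u f) g
          + br3 m q n p h u f g) := by
  have br2_right : br2 m n (p + q - 1) h f (tc q p u g)
      = ∑ k ∈ range m, ∑ b ∈ range q, ∑ i ∈ range k,
          insert2 n (p + q - 1) i k h f (pc p b u g) := by
    rw [br2_tc_right_eq_sum hh hf]
    exact sum_congr rfl fun k _ ↦ sum_comm
  have br3_middle : br3 m n q p h f u g
      = ∑ k ∈ range m, ∑ j ∈ Ico (k + 1) m, ∑ i ∈ range k, insert3 n q p i k j h f u g := by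
    rw [br3_eq_sum_insert3, sum_range_sum_Ico_comm]
  have br2_left : br2 m (n + q - 1) p h (tc q n u f) g
      = ∑ k ∈ range m, ∑ j ∈ Ico (k + 1) m, ∑ a ∈ range q,
          insert2 (n + q - 1) p k j h (pc n a u f) g := by
    rw [br2_tc_left_eq_sum hh, sum_range_sum_Ico_comm]
  have br3_first : br3 m q n p h u f g
      = ∑ k ∈ range m, ∑ j ∈ Ico (k + 1) m, ∑ i ∈ Ico (k + 1) j, insert3 q n p k i j h u f g := by
    rw [br3_eq_sum_insert3, sum_range_sum_Ico_comm]
    exact sum_congr rfl fun j _ ↦ (sum_range_sum_Ico_comm j _).symm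
  have tc_inside : tc m (q + n + p - 2) h (br2 q n p u f g)
      = ∑ k ∈ range m, ∑ b ∈ range q, ∑ a ∈ range b,
          pc (q + n + p - 2) k h (insert2 n p a b u f g) := by
    rw [tc_eq_sum, br2_eq_sum_insert2]
    refine sum_congr rfl fun k hk ↦ ?_
    simp only [pc_sum_right (hh k (mem_range.1 hk))]
  rw [br2_tc_eq_sum, br3_eq_sum_insert3, br2_right, tc_inside, br3_middle, br2_left, br3_first]
  rw [sum_congr rfl fun k hk ↦
    sum_insert2_pc (hh k (mem_range.1 hk)) u hf hg (mem_range.1 hk)]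
  simp only [sum_add_distrib, smul_sum]

end Brace

section Differential

variable {m n p : ℕ} {h f : (ℕ → L) → L}

theorem br2_zsmul_sub_left (m n p : ℕ) (e : ℤ) (A B f g : (ℕ → L) → L) :
    br2 m n p (e • A - B) f g = e • br2 m n p A f g - br2 m n p B f g := by
  simp only [br2_eq_sum_insert2, insert2, pc_sub_left, pc_zsmul_left, sum_sub_distrib, smul_sum]

theorem br2_zsmul_sub_middle (hh : ∀ l < m, AdditiveAt l h) (e : ℤ) (A B g : (ℕ → L) → L) :
    br2 m n p h (e • A - B) g = e • br2 m n p h A g - br2 m n p h B g := by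
  simp only [br2_eq_sum_insert2, smul_sum, ← sum_sub_distrib]
  refine sum_congr rfl fun j hj ↦ sum_congr rfl fun i hi ↦ ?_
  have additive_i : AdditiveAt i h := hh i ((mem_range.1 hi).trans (mem_range.1 hj))
  simp only [insert2, pc_sub_right additive_i, pc_zsmul_right additive_i, pc_sub_left,
    pc_zsmul_left]

theorem br2_zsmul_sub_right (hh : ∀ l < m, AdditiveAt l h) (hf : DependsOn f (Set.Iio n))
    (e : ℤ) (A B : (ℕ → L) → L) :
    br2 m n p h f (e • A - B) = e • br2 m n p h f A - br2 m n p h f B := by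
  simp only [br2_eq_sum_insert2, smul_sum, ← sum_sub_distrib]
  refine sum_congr rfl fun j hj ↦ sum_congr rfl fun i hi ↦ ?_
  have additive_j := additiveAt_pc (hh j (mem_range.1 hj)) hf (mem_range.1 hi)
  rw [insert2, pc_sub_right additive_j, pc_zsmul_right additive_j, insert2, insert2]

theorem tc_zsmul_right (hh : ∀ l < m, AdditiveAt l h) (e : ℤ) (f : (ℕ → L) → L) :
    tc m n h (e • f) = e • tc m n h f := by
  simp only [tc_eq_sum, smul_sum]
  exact sum_congr rfl fun i hi ↦ pc_zsmul_right (hh i (mem_range.1 hi)) e f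

theorem tc_zero_right (hh : ∀ l < m, AdditiveAt l h) : tc m n h 0 = 0 := by
  rw [tc_eq_sum]
  exact sum_eq_zero fun i hi ↦ pc_zero_right (hh i (mem_range.1 hi))

theorem delta_eq_zsmul_sub (μ : C K L 2) (m : ℕ) (f : (ℕ → L) → L) :
    delta μ m f = sgn ((m : ℤ) - 1) • tc 2 m (ex μ) f - tc m 2 f (ex μ) := by
  ext x
  simp [delta, gb]

theorem delta_br2 (μ : C K L 2) (m n p : ℕ) (h f g : (ℕ → L) → L) :
    delta μ (m + n + p - 2) (br2 m n p h f g)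
      = (sgn ((m : ℤ) - 1) * sgn ((n : ℤ) - 1) * sgn ((p : ℤ) - 1)) •
          tc 2 (m + n + p - 2) (ex μ) (br2 m n p h f g)
        - tc (m + n + p - 2) 2 (br2 m n p h f g) (ex μ) := by
  rw [delta_eq_zsmul_sub]
  -- For `m < 2` the degree `m + n + p - 2` may be truncated, but then the brace vanishes.
  rcases lt_or_ge m 2 with hm | hm
  · have br2_eq_zero : br2 m n p h f g = 0 := by
      ext x
      simp [br2, show m - 1 = 0 by omega]
    rw [br2_eq_zero, tc_zero_right fun _ hl ↦ additiveAt_ex μ hl, smul_zero, smul_zero]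
  · have cast_degree : ((m + n + p - 2 : ℕ) : ℤ) - 1
        = ((m : ℤ) - 1) + ((n : ℤ) - 1) + ((p : ℤ) - 1) := by omega
    rw [cast_degree, sgn_add, sgn_add]

theorem cup_eq_zsmul_br2 (μ : C K L 2) (n p : ℕ) (f g : (ℕ → L) → L) :
    cup μ n p f g = sgn (n : ℤ) • br2 2 n p (ex μ) f g := by
  ext x
  simp [cup, br2]

theorem cup_tc_left (μ : C K L 2) (m n p : ℕ) (h f g : (ℕ → L) → L) :
    cup μ (m + n - 1) p (tc m n h f) g
      = -(sgn ((m : ℤ) - 1) * sgn ((n : ℤ) - 1)) • br2 2 (m + n - 1) p (ex μ) (tc m n h f) g := by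
  rw [cup_eq_zsmul_br2]
  -- For `m = 0` the degree `m + n - 1` may be truncated, but then `h ∘ f` vanishes.
  rcases m.eq_zero_or_pos with rfl | hm
  · simp [br2_tc_left_eq_sum (fun _ hl ↦ additiveAt_ex μ hl)]
  · have cast_degree : ((m + n - 1 : ℕ) : ℤ) - 1 = ((m : ℤ) - 1) + ((n : ℤ) - 1) := by omega
    rw [sgn_eq_neg_sgn_sub_one, cast_degree, sgn_add]

theorem sgn_smul_cup (μ : C K L 2) (m n p : ℕ) (f g : (ℕ → L) → L) :
    sgn (((m : ℤ) - 1) * (n : ℤ)) • cup μ n p f g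
      = -(sgn ((m : ℤ) - 1) * sgn ((n : ℤ) - 1) * koszulSign n m) • br2 2 n p (ex μ) f g := by
  rw [cup_eq_zsmul_br2, smul_smul, sgn_eq_neg_sgn_sub_one n, koszulSign,
    show ((m : ℤ) - 1) * (n : ℤ) = (m - 1) + (n - 1) * (m - 1) by ring, sgn_add]
  congr 1
  ring

theorem tc_cup (μ : C K L 2) (hh : ∀ l < m, AdditiveAt l h) (n p : ℕ) (f g : (ℕ → L) → L) :
    tc m (n + p) h (cup μ n p f g)
      = -sgn ((n : ℤ) - 1) • tc m (n + p) h (br2 2 n p (ex μ) f g) := by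
  rw [cup_eq_zsmul_br2, tc_zsmul_right hh, sgn_eq_neg_sgn_sub_one]

theorem tc_br2_ex {g : (ℕ → L) → L} (hh : ∀ l < m, AdditiveAt l h)
    (hf : DependsOn f (Set.Iio n)) (μ : C K L 2) :
    tc (m + n + p - 2) 2 (br2 m n p h f g) (ex μ)
      = (sgn ((n : ℤ) - 1) * sgn ((p : ℤ) - 1)) • br3 m 2 n p h (ex μ) f g
        + sgn ((p : ℤ) - 1) • br2 m (n + 1) p h (tc n 2 f (ex μ)) g
        + sgn ((p : ℤ) - 1) • br3 m n 2 p h f (ex μ) g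
        + br2 m n (p + 1) h f (tc p 2 g (ex μ))
        + br3 m n p 2 h f g (ex μ) := by
  simpa only [koszulSign_two_right, Nat.add_succ_sub_one] using tc_br2 hh hf g (dependsOn_ex μ)

theorem br2_tc_ex {g : (ℕ → L) → L} (hh : ∀ l < m, AdditiveAt l h) (μ : C K L 2)
    (hf : DependsOn f (Set.Iio n)) (hg : DependsOn g (Set.Iio p)) :
    br2 (m + 1) n p (tc m 2 h (ex μ)) f g
      = (sgn ((n : ℤ) - 1) * sgn ((p : ℤ) - 1)) • br3 m n p 2 h f g (ex μ)
        + (sgn ((n : ℤ) - 1) • br2 m n (p + 1) h f (tc 2 p (ex μ) g)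
          + tc m (n + p) h (br2 2 n p (ex μ) f g))
        + (sgn ((n : ℤ) - 1) • br3 m n 2 p h f (ex μ) g
          + br2 m (n + 1) p h (tc 2 n (ex μ) f) g
          + br3 m 2 n p h (ex μ) f g) := by
  have arity_cup : 2 + n + p - 2 = n + p := by omega
  simpa only [koszulSign_two_right, Nat.add_succ_sub_one, arity_cup]
    using br2_tc (q := 2) hh (ex μ) hf hg

theorem br2_ex_tc {g : (ℕ → L) → L} (μ : C K L 2) (h : (ℕ → L) → L)
    (hf : DependsOn f (Set.Iio n)) (hg : DependsOn g (Set.Iio p)) :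
    br2 (m + 1) n p (tc 2 m (ex μ) h) f g
      = koszulSign n m • br2 2 n (m + p - 1) (ex μ) f (tc m p h g)
        + tc 2 (m + n + p - 2) (ex μ) (br2 m n p h f g)
        + br2 2 (m + n - 1) p (ex μ) (tc m n h f) g := by
  have br3_two (n p q : ℕ) (f g b : (ℕ → L) → L) : br3 2 n p q (ex μ) f g b = 0 := by
    ext x
    simp [br3]
  have arity_left : 2 + m - 1 = m + 1 := by omega
  simpa only [br3_two, smul_zero, zero_add, add_zero, arity_left, add_comm p m, add_comm n m]
    using br2_tc (q := m) (fun _ hl ↦ additiveAt_ex μ hl) h hf hg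

theorem second_order_operadic_stokes_law_general (μ : C K L 2) {g : (ℕ → L) → L}
    (hh : ∀ l < m, AdditiveAt l h) (hf : DependsOn f (Set.Iio n))
    (hg : DependsOn g (Set.Iio p)) :
    delta μ (m + n + p - 2) (br2 m n p h f g)
        - br2 m n (p + 1) h f (delta μ p g)
        - sgn ((p : ℤ) - 1) • br2 m (n + 1) p h (delta μ n f) g
        - sgn (((p : ℤ) - 1) + ((n : ℤ) - 1)) • br2 (m + 1) n p (delta μ m h) f g
      = sgn ((p : ℤ) - 1) •
          (cup μ (m + n - 1) p (tc m n h f) g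
            + sgn (((m : ℤ) - 1) * (n : ℤ)) • cup μ n (m + p - 1) f (tc m p h g)
            - tc m (n + p) h (cup μ n p f g)) := by
  rw [delta_br2, delta_eq_zsmul_sub μ p, delta_eq_zsmul_sub μ n, delta_eq_zsmul_sub μ m,
    br2_zsmul_sub_right hh hf, br2_zsmul_sub_middle hh, br2_zsmul_sub_left,
    tc_br2_ex hh hf, br2_tc_ex hh μ hf hg, br2_ex_tc μ h hf hg,
    cup_tc_left, sgn_smul_cup, tc_cup μ hh, sgn_add]
  rcases sgn_eq_one_or_neg_one ((n : ℤ) - 1) with hn | hn <;>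
    rcases sgn_eq_one_or_neg_one ((p : ℤ) - 1) with hp | hp <;>
    rw [hn, hp] <;> module

end Differential

/-- the second-order operadic Stokes law
`δ̄⟨h|fg⟩ = (-1)^{|g|} (⟨h|f⟩ ⌣ g + (-1)^{|h| deg f} f ⌣ ⟨h|g⟩ − ⟨h|f ⌣ g⟩)`. -/
theorem second_order_operadic_stokes_law
    (μ : C K L 2) {m n p : ℕ} (h : C K L m) (f : C K L n) (g : C K L p) :
    delta μ (m + n + p - 2) (br2 m n p (ex h) (ex f) (ex g))
        - br2 m n (p + 1) (ex h) (ex f) (delta μ p (ex g))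
        - sgn ((p : ℤ) - 1) • br2 m (n + 1) p (ex h) (delta μ n (ex f)) (ex g)
        - sgn (((p : ℤ) - 1) + ((n : ℤ) - 1)) •
            br2 (m + 1) n p (delta μ m (ex h)) (ex f) (ex g)
      = sgn ((p : ℤ) - 1) •
          (cup μ (m + n - 1) p (tc m n (ex h) (ex f)) (ex g)
            + sgn (((m : ℤ) - 1) * (n : ℤ)) •
                cup μ n (m + p - 1) (ex f) (tc m p (ex h) (ex g))
            - tc m (n + p) (ex h) (cup μ n p (ex f) (ex g))) :=
  second_order_operadic_stokes_law_general μ (fun _ hl ↦ additiveAt_ex h hl) (dependsOn_ex f)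
    (dependsOn_ex g)

end OperadPrelude
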